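/- For any convex multiplicative system of means M, there exists p ∈ [1,∞] such that M agrees with the power mean M_p on uniform weightings: M(u_n, x) = M_p(u_n, x) for every n ≥ 1 and every x ∈ (ℝ≥0)^n, where u_n = (1/n,…,1/n) ∈ Δ_n. -/

import Mathlib

open scoped NNReal ENNReal BigOperators

/-- The power mean `M_p` of order `p ∈ [0,∞]` with weights `w` and arguments `x`. -/
noncomputable def powerMean (p : ℝ≥0∞) {n : ℕ} (w x : Fin n → ℝ≥0) : ℝ≥0 :=
  if p = ∞ then (Finset.univ.filter (fun i => 0 < w i)).sup x
  else if p = 0 then ∏ i, x i ^ ((w i : ℝ))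
  else (∑ i, w i * x i ^ p.toReal) ^ (1 / p.toReal)

/-- A system of means: for each `n`, a function `M n : Δ_n × ℝ≥0ⁿ → ℝ≥0`
(defined on all of `ℝ≥0ⁿ × ℝ≥0ⁿ`, with the axioms demanded only when `∑ w = 1`),
satisfying functoriality, consistency and monotonicity. -/
structure MeanSystem where
  M : ∀ n : ℕ, (Fin n → ℝ≥0) → (Fin n → ℝ≥0) → ℝ≥0
  functorial : ∀ {m n : ℕ} (f : Fin m → Fin n) (w : Fin m → ℝ≥0),
    (∑ i, w i) = 1 → ∀ x : Fin n → ℝ≥0,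
      M n (fun j => ∑ i ∈ Finset.univ.filter (fun i => f i = j), w i) x = M m w (x ∘ f)
  consistent : ∀ c : ℝ≥0, M 1 (fun _ => 1) (fun _ => c) = c
  mono : ∀ {n : ℕ} (w x y : Fin n → ℝ≥0), (∑ i, w i) = 1 →
    (∀ i, x i ≤ y i) → M n w x ≤ M n w y

/-- Multiplicativity of a system of means, with respect to the fixed bijection
`finProdFinEquiv : Fin m × Fin n ≃ Fin (m * n)`. -/
def MeanSystem.IsMultiplicative (S : MeanSystem) : Prop :=
  ∀ {m n : ℕ} (w x : Fin m → ℝ≥0) (v y : Fin n → ℝ≥0),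
    (∑ i, w i) = 1 → (∑ j, v j) = 1 →
    S.M (m * n) (fun k => w (finProdFinEquiv.symm k).1 * v (finProdFinEquiv.symm k).2)
        (fun k => x (finProdFinEquiv.symm k).1 * y (finProdFinEquiv.symm k).2)
      = S.M m w x * S.M n v y

/-- Convexity of a system of means. -/
def MeanSystem.IsConvex (S : MeanSystem) : Prop :=
  ∀ {n : ℕ} (w x y : Fin n → ℝ≥0), (∑ i, w i) = 1 →
    S.M n w (fun i => (x i + y i) / 2) ≤ max (S.M n w x) (S.M n w y)

theorem limit_aux (x y C : ℝ) (n : ℕ) (hx : 0 ≤ x) (hy : 0 ≤ y)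
    (h : ∀ k : ℕ, x ^ k ≤ C * ((k : ℝ) + 1) ^ n * y ^ k) : x ≤ y := by
  by_contra hlt
  push Not at hlt
  rcases hy.eq_or_lt with h0 | h0
  · have := h 1
    rw [← h0] at this hlt
    simp at this
    linarith
  have hr : 1 < x / y := by rwa [one_lt_div h0]
  have ht := tendsto_pow_const_div_const_pow_of_one_lt n hr
  have ht2 := (Filter.tendsto_add_atTop_iff_nat 1).2 ht
  have ht3 := ht2.const_mul (C * (x / y))
  rw [mul_zero] at ht3
  have hev := ht3.eventually (gt_mem_nhds (zero_lt_one))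
  obtain ⟨k, hk⟩ := hev.exists
  have h1 := h k
  have hxp : 0 < x := by linarith
  have hrk : (x / y) ^ k ≤ C * ((k : ℝ) + 1) ^ n := by
    rw [div_pow, div_le_iff₀ (by positivity)]
    exact h1
  have hp : 0 < (x / y) ^ (k + 1) := by positivity
  rw [← mul_div_assoc, div_lt_one hp, pow_succ] at hk
  push_cast at hk
  have : 0 < x / y := by positivity
  nlinarith

theorem limit_aux' (x y C : ℝ≥0) (n : ℕ)
    (h : ∀ k : ℕ, x ^ k ≤ C * ((k : ℝ≥0) + 1) ^ n * y ^ k) : x ≤ y := by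
  have := limit_aux x y C n x.2 y.2 (fun k => by exact_mod_cast h k)
  exact_mod_cast this

namespace MeanSystem

theorem funct' (S : MeanSystem) {m n : ℕ} (f : Fin m → Fin n) (w : Fin m → ℝ≥0)
    (v : Fin n → ℝ≥0) (hw : ∑ i, w i = 1)
    (hv : ∀ j, v j = ∑ i, if f i = j then w i else 0) (x : Fin n → ℝ≥0) :
    S.M n v x = S.M m w (x ∘ f) := by
  rw [← S.functorial f w hw x]
  congr 1
  funext j
  rw [hv, Finset.sum_filter]

theorem const (S : MeanSystem) {n : ℕ} (w : Fin n → ℝ≥0) (hw : ∑ i, w i = 1) (c : ℝ≥0) :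
    S.M n w (fun _ => c) = c := by
  have := S.funct' (fun _ : Fin n => (0 : Fin 1)) w (fun _ => 1) hw
    (fun j => by simp [Subsingleton.elim (0 : Fin 1) j, hw]) (fun _ => c)
  rw [S.consistent] at this
  exact this.symm

theorem homog (S : MeanSystem) (hmul : S.IsMultiplicative) {n : ℕ} (w : Fin n → ℝ≥0)
    (hw : ∑ i, w i = 1) (c : ℝ≥0) (x : Fin n → ℝ≥0) :
    S.M n w (fun i => c * x i) = c * S.M n w x := by
  have h := hmul (m := 1) (fun _ => 1) (fun _ => c) w x (by simp) hw
  rw [S.consistent] at h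
  rw [← h]
  refine S.funct' (fun k : Fin (1 * n) => (finProdFinEquiv.symm k).2) _ w ?_ ?_ _
  · rw [← finProdFinEquiv.sum_comp]
    simp only [Equiv.symm_apply_apply, Fintype.sum_prod_type]
    simp [hw]
  · intro j
    rw [← finProdFinEquiv.sum_comp]
    simp only [Equiv.symm_apply_apply, Fintype.sum_prod_type]
    simp

theorem add_le (S : MeanSystem) (hconv : S.IsConvex) (hmul : S.IsMultiplicative) {n : ℕ}
    (w : Fin n → ℝ≥0) (hw : ∑ i, w i = 1) (x y : Fin n → ℝ≥0) (B : ℝ≥0)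
    (hx : S.M n w x ≤ B) (hy : S.M n w y ≤ B) :
    S.M n w (fun i => x i + y i) ≤ 2 * B := by
  have h := hconv w x y hw
  have h2 : (fun i => x i + y i) = (fun i => 2 * ((x i + y i) / 2)) := by
    funext i
    rw [mul_div_cancel₀]
    norm_num
  rw [h2, S.homog hmul w hw]
  gcongr
  exact h.trans (max_le hx hy)

theorem sum_le (S : MeanSystem) (hconv : S.IsConvex) (hmul : S.IsMultiplicative) {n : ℕ}
    (w : Fin n → ℝ≥0) (hw : ∑ i, w i = 1) (F : ℝ≥0 → Fin n → ℝ≥0) (B : ℝ≥0) (j : ℕ) :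
    ∀ V : Finset ℝ≥0, (∀ v ∈ V, S.M n w (F v) ≤ B) → V.card ≤ 2 ^ j →
    S.M n w (fun i => ∑ v ∈ V, F v i) ≤ 2 ^ j * B := by
  induction j with
  | zero =>
    intro V hV hc
    rw [pow_zero, Finset.card_le_one_iff_subset_singleton] at hc
    obtain ⟨a, ha⟩ := hc
    rcases Finset.subset_singleton_iff.1 ha with h | h
    · subst h
      simp [S.const w hw]
    · subst h
      simpa using hV a (by simp)
  | succ j ih =>
    intro V hV hc
    obtain ⟨U, hU, hUc⟩ := Finset.exists_subset_card_eq (s := V) (n := V.card / 2) (by omega)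
    have h1 := ih U (fun v hv => hV v (hU hv)) (by rw [pow_succ] at hc; omega)
    have h2 := ih (V \ U) (fun v hv => hV v (Finset.sdiff_subset hv))
      (by rw [Finset.card_sdiff_of_subset hU]; rw [pow_succ] at hc; omega)
    have h3 := S.add_le hconv hmul w hw _ _ _ h2 h1
    simp only [Finset.sum_sdiff hU] at h3
    rw [pow_succ, mul_comm _ (2 : ℝ≥0), mul_assoc]
    exact h3

/-- value at an indicator -/
noncomputable def phi (S : MeanSystem) (t : ℝ≥0) : ℝ≥0 := S.M 2 ![1 - t, t] ![0, 1]

theorem indicator (S : MeanSystem) {n : ℕ} (w : Fin n → ℝ≥0) (hw : ∑ i, w i = 1)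
    (P : Fin n → Prop) [DecidablePred P] :
    S.M n w (fun i => if P i then 1 else 0) = S.phi (∑ i, if P i then w i else 0) := by
  unfold phi
  rw [S.funct' (fun i => if P i then (1 : Fin 2) else 0) w _ hw]
  · congr 1
    funext i
    by_cases h : P i <;> simp [h]
  · intro j
    have : ∑ i, (if P i then w i else 0) + ∑ i, (if P i then 0 else w i) = 1 := by
      rw [← hw, ← Finset.sum_add_distrib]
      refine Finset.sum_congr rfl fun i _ => ?_
      by_cases h : P i <;> simp [h]
    fin_cases j
    · simp only [Fin.zero_eta, Matrix.cons_val_zero]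
      rw [← this, add_tsub_cancel_left]
      refine Finset.sum_congr rfl fun i _ => ?_
      by_cases h : P i <;> simp [h]
    · change (∑ i, if P i then w i else 0) = ∑ i, if _ = (1 : Fin 2) then w i else 0
      refine Finset.sum_congr rfl fun i _ => ?_
      by_cases h : P i <;> simp [h]

theorem phi_one (S : MeanSystem) : S.phi 1 = 1 := by
  have := S.indicator (fun _ : Fin 1 => 1) (by simp) (fun _ => True)
  simp only [if_true, S.consistent] at this
  simpa using this.symm

theorem phi_zero (S : MeanSystem) : S.phi 0 = 0 := by
  have := S.indicator (fun _ : Fin 1 => 1) (by simp) (fun _ => False)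
  simp only [if_false, S.consistent] at this
  simpa using this.symm

theorem phi_mono (S : MeanSystem) (s t : ℝ≥0) (hst : s ≤ t) (ht : t ≤ 1) :
    S.phi s ≤ S.phi t := by
  have hw : ∑ i, (![1 - t, t - s, s] : Fin 3 → ℝ≥0) i = 1 := by
    simp [Fin.sum_univ_three]
    rw [add_assoc, tsub_add_cancel_of_le hst, tsub_add_cancel_of_le ht]
  have h1 := S.indicator _ hw (fun i => i = 2)
  have h2 := S.indicator _ hw (fun i => i = 1 ∨ i = 2)
  have e1 : (∑ i, if i = 2 then (![1 - t, t - s, s] : Fin 3 → ℝ≥0) i else 0) = s := by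
    simp
  have e2 : (∑ i, if i = 1 ∨ i = 2 then (![1 - t, t - s, s] : Fin 3 → ℝ≥0) i else 0) = t := by
    simp [Fin.sum_univ_three, tsub_add_cancel_of_le hst]
  rw [e1] at h1
  rw [e2] at h2
  rw [← h1, ← h2]
  refine S.mono _ _ _ hw fun i => ?_
  by_cases h : i = 2 <;> simp [h]

theorem phi_mul (S : MeanSystem) (hmul : S.IsMultiplicative) (s t : ℝ≥0) (hs : s ≤ 1)
    (ht : t ≤ 1) : S.phi (s * t) = S.phi s * S.phi t := by
  have hs' : ∑ i, (![1 - s, s] : Fin 2 → ℝ≥0) i = 1 := by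
    simp [Fin.sum_univ_two, tsub_add_cancel_of_le hs]
  have ht' : ∑ i, (![1 - t, t] : Fin 2 → ℝ≥0) i = 1 := by
    simp [Fin.sum_univ_two, tsub_add_cancel_of_le ht]
  have h := hmul ![1 - s, s] ![0, 1] ![1 - t, t] ![0, 1] hs' ht'
  unfold phi at *
  rw [← h]
  have hw : ∑ k : Fin (2 * 2), (![1 - s, s] : Fin 2 → ℝ≥0) (finProdFinEquiv.symm k).1 *
      (![1 - t, t] : Fin 2 → ℝ≥0) (finProdFinEquiv.symm k).2 = 1 := by
    rw [← finProdFinEquiv.sum_comp]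
    simp only [Equiv.symm_apply_apply, Fintype.sum_prod_type]
    rw [← Fintype.sum_mul_sum, hs', ht', one_mul]
  have h2 := S.indicator _ hw
    (fun k : Fin (2 * 2) => (finProdFinEquiv.symm k).1 = 1 ∧ (finProdFinEquiv.symm k).2 = 1)
  have e : (∑ k : Fin (2 * 2), if (finProdFinEquiv.symm k).1 = 1 ∧ (finProdFinEquiv.symm k).2 = 1
      then (![1 - s, s] : Fin 2 → ℝ≥0) (finProdFinEquiv.symm k).1 *
      (![1 - t, t] : Fin 2 → ℝ≥0) (finProdFinEquiv.symm k).2 else 0) = s * t := by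
    rw [← finProdFinEquiv.sum_comp]
    simp only [Equiv.symm_apply_apply, Fintype.sum_prod_type, Fin.sum_univ_two]
    simp
  rw [e] at h2
  unfold phi at h2
  rw [← h2]
  congr 1
  funext k
  generalize finProdFinEquiv.symm k = q
  obtain ⟨a, b⟩ := q
  fin_cases a <;> fin_cases b <;> simp

theorem phi_pow (S : MeanSystem) (hmul : S.IsMultiplicative) (t : ℝ≥0) (ht : t ≤ 1) (k : ℕ) :
    S.phi (t ^ k) = S.phi t ^ k := by
  induction k with
  | zero => simp [S.phi_one]
  | succ k ih => rw [pow_succ, pow_succ, S.phi_mul hmul _ _ (pow_le_one₀ (by simp) ht) ht, ih]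

theorem phi_half (S : MeanSystem) (hconv : S.IsConvex) : (1 / 2 : ℝ≥0) ≤ S.phi (1 / 2) := by
  have hhalf : (2 : ℝ≥0)⁻¹ + 2⁻¹ = 1 := by rw [← two_mul]; norm_num
  have hw : ∑ i : Fin 2, (fun _ => 1 / 2 : Fin 2 → ℝ≥0) i = 1 := by
    simp
  have h := hconv (fun _ => 1 / 2) (fun i => if i = 0 then 1 else 0)
    (fun i => if i = 1 then 1 else 0) hw
  rw [S.indicator _ hw, S.indicator _ hw] at h
  have e : (fun i : Fin 2 => ((if i = 0 then 1 else 0) + (if i = 1 then 1 else 0)) / 2)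
      = (fun _ => (1 / 2 : ℝ≥0)) := by
    funext i
    fin_cases i <;> simp
  rw [e, S.const _ hw] at h
  simpa using h

theorem phi_eq (S : MeanSystem) (hconv : S.IsConvex) (hmul : S.IsMultiplicative) :
    ∃ a : ℝ, 0 ≤ a ∧ a ≤ 1 ∧ ∀ t : ℝ≥0, 0 < t → t ≤ 1 → S.phi t = t ^ a := by
  have hh := S.phi_half hconv
  have hh1 : S.phi (1 / 2) ≤ 1 := by
    refine le_of_le_of_eq ?_ S.phi_one
    exact S.phi_mono _ _ (by rw [one_div]; exact inv_le_one_of_one_le₀ (by norm_num)) le_rfl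
  have hle : (1 / 2 : ℝ≥0) ≤ 1 := by rw [one_div]; exact inv_le_one_of_one_le₀ (by norm_num)
  obtain ⟨a, ha⟩ : ∃ a : ℝ, S.phi (1 / 2) = (1 / 2 : ℝ≥0) ^ a := by
    refine ⟨Real.logb (1 / 2) (S.phi (1 / 2)), ?_⟩
    apply NNReal.eq
    push_cast
    rw [Real.rpow_logb (by norm_num) (by norm_num)]
    have : 0 < S.phi (1 / 2) := lt_of_lt_of_le (by norm_num) hh
    exact_mod_cast this
  have haR : (0 : ℝ) ≤ a ∧ a ≤ 1 := by
    rw [ha] at hh hh1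
    have hhR : (1 / 2 : ℝ) ≤ (1 / 2 : ℝ) ^ a := by exact_mod_cast hh
    have hhR1 : (1 / 2 : ℝ) ^ a ≤ 1 := by exact_mod_cast hh1
    constructor
    · replace hhR1 : (1 / 2 : ℝ) ^ a ≤ (1 / 2 : ℝ) ^ (0 : ℝ) := by rwa [Real.rpow_zero]
      exact (Real.rpow_le_rpow_left_iff_of_base_lt_one (by norm_num) (by norm_num)).1 hhR1
    · nth_rewrite 1 [← Real.rpow_one (1 / 2 : ℝ)] at hhR
      exact (Real.rpow_le_rpow_left_iff_of_base_lt_one (by norm_num) (by norm_num)).1 hhR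
  refine ⟨a, haR.1, haR.2, fun t ht0 ht1 => ?_⟩
  have key : ∀ k : ℕ, ∃ l : ℕ, (1 / 2 : ℝ≥0) ^ (l + 1) < t ^ k ∧ t ^ k ≤ (1 / 2) ^ l := by
    intro k
    exact exists_nat_pow_near_of_lt_one (by positivity) (pow_le_one₀ (by simp) ht1)
      (by norm_num) (by rw [one_div]; exact inv_lt_one_of_one_lt₀ (by norm_num))
  have hpa : ∀ (s : ℝ≥0) (l : ℕ), (s ^ l) ^ a = (s ^ a) ^ l := by
    intro s l
    rw [← NNReal.rpow_natCast, ← NNReal.rpow_natCast, ← NNReal.rpow_mul, ← NNReal.rpow_mul,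
      mul_comm]
  have h2 : ∀ l : ℕ, ((1 / 2 : ℝ≥0) ^ a) ^ l ≤ 2 * ((1 / 2 : ℝ≥0) ^ a) ^ (l + 1) := by
    intro l
    rw [ha] at hh
    have : (1 : ℝ≥0) ≤ 2 * (1 / 2) ^ a := by
      calc (1 : ℝ≥0) = 2 * (1 / 2) := by norm_num
        _ ≤ _ := by gcongr
    calc ((1 / 2 : ℝ≥0) ^ a) ^ l = ((1 / 2 : ℝ≥0) ^ a) ^ l * 1 := by rw [mul_one]
      _ ≤ ((1 / 2 : ℝ≥0) ^ a) ^ l * (2 * (1 / 2) ^ a) := by gcongr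
      _ = _ := by ring
  apply le_antisymm
  · refine limit_aux' _ _ 2 0 fun k => ?_
    obtain ⟨l, hl1, hl2⟩ := key k
    rw [pow_zero, mul_one, ← S.phi_pow hmul t ht1, ← hpa]
    calc S.phi (t ^ k) ≤ S.phi ((1 / 2) ^ l) := S.phi_mono _ _ hl2 (pow_le_one₀ (by simp) hle)
      _ = ((1 / 2 : ℝ≥0) ^ a) ^ l := by rw [S.phi_pow hmul _ hle, ha]
      _ ≤ _ := h2 l
      _ = 2 * ((1 / 2 : ℝ≥0) ^ (l + 1)) ^ a := by rw [hpa]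
      _ ≤ _ := by
        gcongr
        exact haR.1
  · refine limit_aux' _ _ 2 0 fun k => ?_
    obtain ⟨l, hl1, hl2⟩ := key k
    rw [pow_zero, mul_one, ← S.phi_pow hmul t ht1, ← hpa]
    calc (t ^ k) ^ a ≤ ((1 / 2 : ℝ≥0) ^ l) ^ a := by
          gcongr
          exact haR.1
      _ = ((1 / 2 : ℝ≥0) ^ a) ^ l := hpa _ _
      _ ≤ _ := h2 l
      _ = 2 * S.phi ((1 / 2) ^ (l + 1)) := by rw [S.phi_pow hmul _ hle, ha]
      _ ≤ _ := by
        gcongr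
        exact S.phi_mono _ _ hl1.le (pow_le_one₀ (by simp) ht1)

/-- The power sum mean. -/
noncomputable def A (p : ℝ) (n : ℕ) (x : Fin n → ℝ≥0) : ℝ≥0 := ∑ i, (n : ℝ≥0)⁻¹ * x i ^ p

theorem unif {n : ℕ} (hn : 1 ≤ n) : ∑ _i : Fin n, (n : ℝ≥0)⁻¹ = 1 := by
  have : (n : ℝ≥0) ≠ 0 := by positivity
  simp [this]

theorem tensor_pow (S : MeanSystem) (hmul : S.IsMultiplicative) (p : ℝ) {n : ℕ} (hn : 1 ≤ n)
    (x : Fin n → ℝ≥0) (k : ℕ) : ∃ m : ℕ, 1 ≤ m ∧ ∃ y : Fin m → ℝ≥0,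
      S.M m (fun _ => (m : ℝ≥0)⁻¹) y = S.M n (fun _ => (n : ℝ≥0)⁻¹) x ^ k ∧
      A p m y = A p n x ^ k ∧
      ∀ i, ∃ c : Fin n → ℕ, (∀ j, c j ≤ k) ∧ y i = ∏ j, x j ^ c j := by
  induction k with
  | zero =>
    refine ⟨1, le_rfl, fun _ => 1, ?_, ?_, ?_⟩
    · rw [S.const _ (unif le_rfl), pow_zero]
    · simp [A]
    · intro i
      exact ⟨fun _ => 0, by simp, by simp⟩
  | succ k ih =>
    obtain ⟨m, hm, y, h1, h2, h3⟩ := ih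
    refine ⟨n * m, Nat.mul_pos hn hm,
      fun k => x (finProdFinEquiv.symm k).1 * y (finProdFinEquiv.symm k).2, ?_, ?_, ?_⟩
    · rw [pow_succ', ← h1, ← hmul _ _ _ _ (unif hn) (unif hm)]
      congr 1
      funext k
      push_cast
      rw [mul_inv]
    · rw [pow_succ', ← h2]
      unfold A
      rw [Fintype.sum_mul_sum, ← finProdFinEquiv.sum_comp, Fintype.sum_prod_type]
      simp only [Equiv.symm_apply_apply]
      refine Finset.sum_congr rfl fun i _ => Finset.sum_congr rfl fun j _ => ?_
      push_cast
      rw [mul_inv, NNReal.mul_rpow]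
      ring
    · intro i
      obtain ⟨c, hc, hy⟩ := h3 (finProdFinEquiv.symm i).2
      refine ⟨fun j => c j + if j = (finProdFinEquiv.symm i).1 then 1 else 0, fun j => ?_, ?_⟩
      · have := hc j
        dsimp only
        split_ifs <;> omega
      · simp only [pow_add, Finset.prod_mul_distrib]
        rw [hy, mul_comm]
        congr 1
        simp [pow_ite]

theorem card_image {n m k : ℕ} (x : Fin n → ℝ≥0) (y : Fin m → ℝ≥0)
    (h : ∀ i, ∃ c : Fin n → ℕ, (∀ j, c j ≤ k) ∧ y i = ∏ j, x j ^ c j) :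
    (Finset.univ.image y).card ≤ (k + 1) ^ n := by
  have hsub : Finset.univ.image y ⊆ Finset.univ.image
      (fun c : Fin n → Fin (k + 1) => ∏ j, x j ^ (c j : ℕ)) := by
    intro v hv
    obtain ⟨i, -, rfl⟩ := Finset.mem_image.1 hv
    obtain ⟨c, hc, hy⟩ := h i
    exact Finset.mem_image.2 ⟨fun j => ⟨c j, Nat.lt_succ_of_le (hc j)⟩, Finset.mem_univ _, hy.symm⟩
  refine (Finset.card_le_card hsub).trans (Finset.card_image_le.trans ?_)
  simp

/-- one level -/
theorem level (S : MeanSystem) (hmul : S.IsMultiplicative) (a : ℝ) (ha : 0 < a)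
    (hphi : ∀ t : ℝ≥0, 0 < t → t ≤ 1 → S.phi t = t ^ a) {m : ℕ} (hm : 1 ≤ m)
    (y : Fin m → ℝ≥0) (v : ℝ≥0) :
    S.M m (fun _ => (m : ℝ≥0)⁻¹) (fun i => v * if y i = v then 1 else 0) =
      (∑ i, if y i = v then (m : ℝ≥0)⁻¹ * y i ^ (1 / a) else 0) ^ a := by
  rw [S.homog hmul _ (unif hm), S.indicator _ (unif hm)]
  have e : (∑ i, if y i = v then (m : ℝ≥0)⁻¹ * y i ^ (1 / a) else 0) =
      v ^ (1 / a) * ∑ i, if y i = v then (m : ℝ≥0)⁻¹ else 0 := by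
    rw [Finset.mul_sum]
    refine Finset.sum_congr rfl fun i _ => ?_
    split_ifs with h
    · rw [h, mul_comm]
    · simp
  have h1 : (∑ i, if y i = v then (m : ℝ≥0)⁻¹ else 0) ≤ 1 := by
    rw [← unif hm]
    refine Finset.sum_le_sum fun i _ => ?_
    split_ifs <;> simp
  rw [e, NNReal.mul_rpow, ← NNReal.rpow_mul, one_div, inv_mul_cancel₀ ha.ne', NNReal.rpow_one]
  congr 1
  rcases eq_or_ne (∑ i, if y i = v then (m : ℝ≥0)⁻¹ else 0) 0 with h0 | h0
  · rw [h0, S.phi_zero, NNReal.zero_rpow ha.ne']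
  · exact hphi _ (pos_iff_ne_zero.2 h0) h1

theorem bounds (S : MeanSystem) (hconv : S.IsConvex) (hmul : S.IsMultiplicative) (a : ℝ)
    (ha : 0 < a) (ha1 : a ≤ 1)
    (hphi : ∀ t : ℝ≥0, 0 < t → t ≤ 1 → S.phi t = t ^ a) {m : ℕ} (hm : 1 ≤ m)
    (y : Fin m → ℝ≥0) (L : ℕ) (hL1 : 1 ≤ L) (hL : (Finset.univ.image y).card ≤ L) :
    S.M m (fun _ => (m : ℝ≥0)⁻¹) y ≤ 2 * L * A (1 / a) m y ^ a ∧
    A (1 / a) m y ^ a ≤ L * S.M m (fun _ => (m : ℝ≥0)⁻¹) y := by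
  have hlev := S.level hmul a ha hphi hm y
  have hdec : (fun i => ∑ v ∈ Finset.univ.image y, v * if y i = v then 1 else 0) = y := by
    funext i
    simp
  have hA : A (1 / a) m y = ∑ v ∈ Finset.univ.image y,
      ∑ i, if y i = v then (m : ℝ≥0)⁻¹ * y i ^ (1 / a) else 0 := by
    rw [Finset.sum_comm]
    unfold A
    refine Finset.sum_congr rfl fun i _ => ?_
    simp
  constructor
  · have hj1 := Nat.lt_pow_succ_log_self (b := 2) (by norm_num) L
    have hj2 := Nat.pow_log_le_self 2 (x := L) (by omega)
    have h := S.sum_le hconv hmul _ (unif hm)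
      (fun v i => v * if y i = v then 1 else 0) (A (1 / a) m y ^ a) (Nat.log 2 L + 1)
      (Finset.univ.image y) ?_ (hL.trans hj1.le)
    · rw [hdec] at h
      refine h.trans ?_
      gcongr
      rw [pow_succ, mul_comm]
      gcongr
      exact_mod_cast hj2
    · intro v hv
      rw [hlev]
      gcongr
      rw [hA]
      exact Finset.single_le_sum (f := fun v => ∑ i, if y i = v then
        (m : ℝ≥0)⁻¹ * y i ^ (1 / a) else 0) (fun _ _ => by simp) hv
  · have hv : ∀ v : ℝ≥0, (∑ i, if y i = v then (m : ℝ≥0)⁻¹ * y i ^ (1 / a) else 0) ≤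
        S.M m (fun _ => (m : ℝ≥0)⁻¹) y ^ (1 / a) := by
      intro v
      rw [one_div a, NNReal.le_rpow_inv_iff ha, ← one_div a, ← hlev]
      refine S.mono _ _ _ (unif hm) fun i => ?_
      split_ifs with h <;> simp [h]
    have hsum : A (1 / a) m y ≤ L * S.M m (fun _ => (m : ℝ≥0)⁻¹) y ^ (1 / a) := by
      rw [hA]
      refine (Finset.sum_le_card_nsmul _ _ _ fun v _ => hv v).trans ?_
      rw [nsmul_eq_mul]
      gcongr
    calc A (1 / a) m y ^ a ≤ (L * S.M m (fun _ => (m : ℝ≥0)⁻¹) y ^ (1 / a)) ^ a := by gcongr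
      _ = (L : ℝ≥0) ^ a * S.M m (fun _ => (m : ℝ≥0)⁻¹) y := by
        rw [NNReal.mul_rpow, ← NNReal.rpow_mul, one_div, inv_mul_cancel₀ ha.ne', NNReal.rpow_one]
      _ ≤ _ := by
        gcongr
        calc (L : ℝ≥0) ^ a ≤ (L : ℝ≥0) ^ (1 : ℝ) :=
              NNReal.rpow_le_rpow_of_exponent_le (by exact_mod_cast hL1) ha1
          _ = L := NNReal.rpow_one _

theorem main_fin (S : MeanSystem) (hconv : S.IsConvex) (hmul : S.IsMultiplicative) (a : ℝ)
    (ha : 0 < a) (ha1 : a ≤ 1)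
    (hphi : ∀ t : ℝ≥0, 0 < t → t ≤ 1 → S.phi t = t ^ a) {n : ℕ} (hn : 1 ≤ n)
    (x : Fin n → ℝ≥0) : S.M n (fun _ => (n : ℝ≥0)⁻¹) x = A (1 / a) n x ^ a := by
  have key : ∀ k : ℕ, S.M n (fun _ => (n : ℝ≥0)⁻¹) x ^ k ≤
      2 * ((k : ℝ≥0) + 1) ^ n * (A (1 / a) n x ^ a) ^ k ∧
      (A (1 / a) n x ^ a) ^ k ≤
      1 * ((k : ℝ≥0) + 1) ^ n * S.M n (fun _ => (n : ℝ≥0)⁻¹) x ^ k := by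
    intro k
    obtain ⟨m, hm, y, h1, h2, h3⟩ := S.tensor_pow hmul (1 / a) hn x k
    have hb := S.bounds hconv hmul a ha ha1 hphi hm y ((k + 1) ^ n) (Nat.pos_of_ne_zero (by positivity))
      (card_image x y h3)
    rw [h1, h2] at hb
    have e : (A (1 / a) n x ^ k) ^ a = (A (1 / a) n x ^ a) ^ k := by
      rw [← NNReal.rpow_natCast, ← NNReal.rpow_natCast, ← NNReal.rpow_mul, ← NNReal.rpow_mul,
        mul_comm]
    rw [e] at hb
    push_cast at hb
    rw [one_mul]
    exact hb
  exact le_antisymm (limit_aux' _ _ 2 n fun k => (key k).1) (limit_aux' _ _ 1 n fun k => (key k).2)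

theorem main_top (S : MeanSystem) (hmul : S.IsMultiplicative)
    (hphi : ∀ t : ℝ≥0, 0 < t → t ≤ 1 → S.phi t = 1) {n : ℕ} (hn : 1 ≤ n)
    (x : Fin n → ℝ≥0) : S.M n (fun _ => (n : ℝ≥0)⁻¹) x = Finset.univ.sup x := by
  have hn0 : (0 : ℝ≥0) < (n : ℝ≥0)⁻¹ := by positivity
  apply le_antisymm
  · rw [← S.const _ (unif hn) (Finset.univ.sup x)]
    exact S.mono _ _ _ (unif hn) fun i => Finset.le_sup (Finset.mem_univ i)
  · refine Finset.sup_le fun i _ => ?_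
    have h := S.homog hmul _ (unif hn) (x i) (fun j => if j = i then 1 else 0)
    rw [S.indicator _ (unif hn)] at h
    rw [hphi _ (by simpa using hn0) (by
      simp only [Finset.sum_ite_eq', Finset.mem_univ, if_true]
      exact inv_le_one_of_one_le₀ (by exact_mod_cast hn)), mul_one] at h
    rw [← h]
    refine S.mono _ _ _ (unif hn) fun j => ?_
    split_ifs with h <;> simp [h]

end MeanSystem

/-- For any convex multiplicative system of means `M`, there is `p ∈ [1,∞]` such that
`M` agrees with the power mean `M_p` on uniform weightings. -/
theorem meanSystem_uniform_eq_powerMean (S : MeanSystem)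
    (hconv : S.IsConvex) (hmul : S.IsMultiplicative) :
    ∃ p : ℝ≥0∞, 1 ≤ p ∧ ∀ (n : ℕ), 1 ≤ n → ∀ x : Fin n → ℝ≥0,
      S.M n (fun _ => (n : ℝ≥0)⁻¹) x = powerMean p (fun _ => (n : ℝ≥0)⁻¹) x := by
  obtain ⟨a, ha0, ha1, hphi⟩ := S.phi_eq hconv hmul
  rcases ha0.eq_or_lt with h | ha
  · subst h
    refine ⟨∞, le_top, fun n hn x => ?_⟩
    have hn0 : (0 : ℝ≥0) < (n : ℝ≥0)⁻¹ := by positivity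
    rw [S.main_top hmul (fun t h0 h1 => by rw [hphi t h0 h1, NNReal.rpow_zero]) hn]
    unfold powerMean
    rw [if_pos rfl, Finset.filter_true_of_mem (fun _ _ => hn0)]
  · refine ⟨ENNReal.ofReal (1 / a), ?_, fun n hn x => ?_⟩
    · rw [ENNReal.one_le_ofReal]
      exact (one_le_div ha).2 ha1
    · rw [S.main_fin hconv hmul a ha ha1 hphi hn]
      unfold powerMean
      rw [if_neg ENNReal.ofReal_ne_top, if_neg (by simpa using ha),
        ENNReal.toReal_ofReal (by positivity), one_div_one_div]
      rfl
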